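/- arXiv:2307.09581 — 2 statements merged into one kernel-verified Lean document; each statement's English description precedes it below -/
import Mathlib

section
/- For every n ≥ 0, the value of the monic truncated Laguerre polynomial at the endpoint z satisfies P_n(z)²·z^{α+1}·e^{−z} = (α + 1 + 2n − b_n)·h_n, where h_n = ∫₀^z P_n(x)² x^α e^{−x} dx. -/
open MeasureTheory intervalIntegral Polynomial

/-!
Integrating the derivative of `p(x)² x^(α+1) e^(-x)` over `[0, z]` gives
`p(z)² z^(α+1) e^(-z) = ℓ(2 x p' p + (α + 1) p² - x p²)`. If `p` has degree `n` and is orthogonal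
to all polynomials of smaller degree, then `ℓ(x p' p) = n ℓ(p²)`, because `x p' - n p` has degree
less than `n`; and for `p = P n` the three-term recurrence gives `ℓ(x p²) = b n ℓ(p²)`.
-/

section LinearFunctional

theorem coeff_X_mul_derivative {R : Type*} [Semiring R] (p : R[X]) (n : ℕ) :
    (X * derivative p).coeff n = n • p.coeff n := by
  cases n with
  | zero => simp
  | succ n => rw [coeff_X_mul, coeff_derivative, nsmul_eq_mul', Nat.cast_succ]

theorem degree_X_mul_derivative_sub_lt {R : Type*} [Ring R] (p : R[X]) :
    (X * derivative p - p.natDegree • p).degree < (p.natDegree : WithBot ℕ) := by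
  rw [degree_lt_iff_coeff_zero]
  intro m hm
  rw [coeff_sub, coeff_X_mul_derivative, coeff_smul]
  rcases hm.eq_or_lt with rfl | hm
  · exact sub_self _
  · simp [coeff_eq_zero_of_natDegree_lt hm]

theorem map_X_mul_derivative_mul_self {R M : Type*} [Ring R] [AddCommGroup M] [Module R M]
    (L : R[X] →ₗ[R] M) {p : R[X]} (horth : ∀ q : R[X], q.degree < p.natDegree → L (q * p) = 0) :
    L (X * derivative p * p) = p.natDegree • L (p * p) := by
  have h := horth _ (degree_X_mul_derivative_sub_lt p)
  rwa [sub_mul, smul_mul_assoc, map_sub, map_nsmul, sub_eq_zero] at h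

theorem map_mul_eq_zero_of_degree_lt {K M : Type*} [Field K] [AddCommGroup M] [Module K M]
    (L : K[X] →ₗ[K] M) (P : Polynomial.Sequence K) {n : ℕ} {r : K[X]}
    (horth : ∀ m < n, L (P m * r) = 0) {q : K[X]} (hq : q.degree < n) : L (q * r) = 0 := by
  have hspan : q ∈ Submodule.span K (P '' Set.Iio n) := by
    rwa [P.span_degreeLT fun i _ => (leadingCoeff_ne_zero.mpr (P.ne_zero i)).isUnit, mem_degreeLT]
  have hker : Submodule.span K (P '' Set.Iio n) ≤ (L ∘ₗ LinearMap.mulRight K r).ker := by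
    rw [Submodule.span_le]
    rintro _ ⟨m, hm, rfl⟩
    exact horth m hm
  exact hker hspan

theorem map_X_mul_mul_self_of_recurrence {R M : Type*} [Semiring R] [AddCommMonoid M] [Module R M]
    (L : R[X] →ₗ[R] M) {P : ℕ → R[X]} (horth : ∀ m n, m ≠ n → L (P m * P n) = 0)
    {a b c : ℕ → R} (ha : a 0 = 0)
    (hrec : ∀ n, X * P n = C (c n) * P (n + 1) + C (b n) * P n + C (a n) * P (n - 1)) (n : ℕ) :
    L (X * P n * P n) = b n • L (P n * P n) := by
  have hprev : a n • L (P (n - 1) * P n) = 0 := by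
    cases n with
    | zero => rw [ha, zero_smul]
    | succ n => rw [horth _ _ (by lia), smul_zero]
  simp only [hrec n, C_mul', add_mul, smul_mul_assoc, map_add, map_smul, hprev,
    horth (n + 1) n n.succ_ne_self, smul_zero, zero_add, add_zero]

end LinearFunctional

section TruncatedLaguerre

variable {α z : ℝ}

theorem intervalIntegrable_eval_mul_rpow_mul_exp_neg (hα : -1 < α) (z : ℝ) (p : ℝ[X]) :
    IntervalIntegrable (fun x : ℝ => p.eval x * x ^ α * Real.exp (-x)) volume 0 z :=
  ((intervalIntegrable_rpow' hα).continuousOn_mul p.continuousOn).mul_continuousOn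
    (by fun_prop)

/-- The truncated Laguerre functional `ℓ`: integration against `x ^ α * exp (-x)` on `[0, z]`,
bundled as a linear map, so that the convergence condition `-1 < α` is part of its data. -/
noncomputable def truncatedLaguerre (hα : -1 < α) (z : ℝ) : ℝ[X] →ₗ[ℝ] ℝ where
  toFun p := ∫ x in (0 : ℝ)..z, p.eval x * x ^ α * Real.exp (-x)
  map_add' p q := by
    simp only [eval_add, add_mul]
    exact integral_add (intervalIntegrable_eval_mul_rpow_mul_exp_neg hα z p)
      (intervalIntegrable_eval_mul_rpow_mul_exp_neg hα z q)
  map_smul' c p := by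
    simp only [eval_smul, smul_eq_mul, mul_assoc, intervalIntegral.integral_const_mul,
      RingHom.id_apply]

theorem truncatedLaguerre_apply (hα : -1 < α) (z : ℝ) (p : ℝ[X]) :
    truncatedLaguerre hα z p = ∫ x in (0 : ℝ)..z, p.eval x * x ^ α * Real.exp (-x) :=
  rfl

theorem hasDerivAt_eval_mul_rpow_mul_exp_neg (α : ℝ) (p : ℝ[X]) {x : ℝ} (hx : x ≠ 0) :
    HasDerivAt (fun x : ℝ => p.eval x * x ^ (α + 1) * Real.exp (-x))
      ((X * derivative p + (α + 1) • p - X * p).eval x * x ^ α * Real.exp (-x)) x := by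
  have hderiv := ((p.hasDerivAt x).mul
    (Real.hasDerivAt_rpow_const (p := α + 1) (Or.inl hx))).mul (hasDerivAt_neg x).exp
  refine hderiv.congr_deriv ?_
  simp only [Pi.mul_apply, eval_sub, eval_add, eval_mul, eval_X, eval_smul, smul_eq_mul,
    add_sub_cancel_right, Real.rpow_add_one hx]
  ring

theorem truncatedLaguerre_X_mul_derivative_add_sub (hα : -1 < α) (hz : 0 ≤ z) (p : ℝ[X]) :
    truncatedLaguerre hα z (X * derivative p + (α + 1) • p - X * p) =
      p.eval z * z ^ (α + 1) * Real.exp (-z) := by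
  have hα' : 0 < α + 1 := by linarith
  have hcont : Continuous fun x : ℝ => p.eval x * x ^ (α + 1) * Real.exp (-x) :=
    (p.continuous.mul (Real.continuous_rpow_const hα'.le)).mul (by fun_prop)
  rw [truncatedLaguerre_apply, integral_eq_sub_of_hasDerivAt_of_le hz hcont.continuousOn
    (fun x hx => hasDerivAt_eval_mul_rpow_mul_exp_neg α p hx.1.ne')
    (intervalIntegrable_eval_mul_rpow_mul_exp_neg hα z _)]
  simp [Real.zero_rpow hα'.ne']

theorem eval_sq_mul_rpow_mul_exp_neg_of_orthogonal (hα : -1 < α) (hz : 0 ≤ z) {p : ℝ[X]}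
    (horth : ∀ q : ℝ[X], q.degree < p.natDegree → truncatedLaguerre hα z (q * p) = 0) :
    p.eval z ^ 2 * z ^ (α + 1) * Real.exp (-z) =
      (α + 1 + 2 * p.natDegree) * truncatedLaguerre hα z (p * p) -
        truncatedLaguerre hα z (X * p * p) := by
  have hderiv : X * derivative (p * p) = (2 : ℝ) • (X * derivative p * p) := by
    rw [derivative_mul, smul_eq_C_mul, C_ofNat]
    ring
  calc p.eval z ^ 2 * z ^ (α + 1) * Real.exp (-z)
    _ = truncatedLaguerre hα z (X * derivative (p * p) + (α + 1) • (p * p) - X * (p * p)) := by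
      rw [truncatedLaguerre_X_mul_derivative_add_sub hα hz, eval_mul, sq]
    _ = 2 * (p.natDegree • truncatedLaguerre hα z (p * p)) +
          (α + 1) * truncatedLaguerre hα z (p * p) - truncatedLaguerre hα z (X * p * p) := by
      rw [hderiv, map_sub, map_add, map_smul, map_smul, map_X_mul_derivative_mul_self _ horth,
        mul_assoc X, smul_eq_mul, smul_eq_mul]
    _ = _ := by
      rw [nsmul_eq_mul]
      ring

theorem truncated_laguerre_endpoint_general (hα : -1 < α) (hz : 0 ≤ z)
    (P : Polynomial.Sequence ℝ)
    (hP_orth : ∀ m n, m ≠ n →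
      ∫ x in (0 : ℝ)..z, (P m).eval x * (P n).eval x * x ^ α * Real.exp (-x) = 0)
    {a b c : ℕ → ℝ} (ha : a 0 = 0)
    (hrec : ∀ n, X * P n = C (c n) * P (n + 1) + C (b n) * P n + C (a n) * P (n - 1)) (n : ℕ) :
    (P n).eval z ^ 2 * z ^ (α + 1) * Real.exp (-z) =
      (α + 1 + 2 * n - b n) *
        ∫ x in (0 : ℝ)..z, (P n).eval x ^ 2 * x ^ α * Real.exp (-x) := by
  have horth : ∀ m n, m ≠ n → truncatedLaguerre hα z (P m * P n) = 0 := by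
    simpa only [truncatedLaguerre_apply, eval_mul] using hP_orth
  have hlower : ∀ q : ℝ[X], q.degree < (P n).natDegree →
      truncatedLaguerre hα z (q * P n) = 0 := fun q hq =>
    map_mul_eq_zero_of_degree_lt _ P (fun m hm => horth m n hm.ne) (by rwa [P.natDegree_eq] at hq)
  have hnorm : ∫ x in (0 : ℝ)..z, (P n).eval x ^ 2 * x ^ α * Real.exp (-x) =
      truncatedLaguerre hα z (P n * P n) := by
    simp only [truncatedLaguerre_apply, eval_mul, sq]
  rw [eval_sq_mul_rpow_mul_exp_neg_of_orthogonal hα hz hlower,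
    map_X_mul_mul_self_of_recurrence _ horth ha hrec, P.natDegree_eq, hnorm, smul_eq_mul, ← sub_mul]

end TruncatedLaguerre

/-- Endpoint evaluation identity: . -/
theorem truncated_laguerre_endpoint (α z : ℝ) (hα : -1 < α) (hz : 0 < z)
    (P : ℕ → Polynomial ℝ)
    (hP_monic : ∀ n, (P n).Monic)
    (hP_deg : ∀ n, (P n).natDegree = n)
    (hP_orth : ∀ m n, m ≠ n →
      ∫ x in (0:ℝ)..z, (P m).eval x * (P n).eval x * x ^ α * Real.exp (-x) = 0)
    (a b : ℕ → ℝ)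
    (ha0 : a 0 = 0)
    (hrec0 : Polynomial.X * P 0 = P 1 + Polynomial.C (b 0) * P 0)
    (hrec : ∀ n, 1 ≤ n →
      Polynomial.X * P n = P (n + 1) + Polynomial.C (b n) * P n + Polynomial.C (a n) * P (n - 1)) :
    ∀ n : ℕ,
      ((P n).eval z) ^ 2 * z ^ (α + 1) * Real.exp (-z) =
        (α + 1 + 2 * (n : ℝ) - b n) *
          ∫ x in (0:ℝ)..z, ((P n).eval x) ^ 2 * x ^ α * Real.exp (-x) := by
  have hdegree (n : ℕ) : (P n).degree = n := by
    rw [degree_eq_natDegree (hP_monic n).ne_zero, hP_deg]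
  refine truncated_laguerre_endpoint_general hα hz.le ⟨P, hdegree⟩ hP_orth (c := 1) ha0 ?_
  rintro (_ | n)
  · simpa [ha0] using hrec0
  · simpa using hrec (n + 1) n.succ_pos
end

section
/- The recurrence coefficients γ_n of the truncated generalized Hermite polynomials satisfy: (i) for every k ≥ 1, γ_{2k}·((α + 2k + 1) − (γ_{2k+1} + γ_{2k}))·((α + 2k) − (γ_{2k} + γ_{2k−1})) = z·(k − γ_{2k})²; and (ii) for every k ≥ 0, γ_{2k+1}·((α + 2k + 2) − (γ_{2k+2} + γ_{2k+1}))·((α + 2k + 1) − (γ_{2k+1} + γ_{2k})) = z·(k + α + 1 − γ_{2k+1})². -/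
open MeasureTheory intervalIntegral Polynomial

/-! The weight `w x = |x| ^ (2α+1) * exp (-x²)` satisfies the Pearson equation
`(x w)' = (2α + 2 - 2x²) w`, so with `L p = ∫ p w` over `[-a, a]` and `a = √z`,
integrating `(x p w)'` expresses `L (X p') + (2α + 2) L p - 2 L (X² p)` through the boundary
values `p (±a)`.
Taking `p = S_n²` evaluates `S_n(a)²`, and taking `p = S_{n+1} S_n / X`, a polynomial because one
of the two factors is odd, evaluates `S_{n+1}(a) S_n(a)`. The nonlinear relation is
`S_{n+1}(a)² · S_n(a)² = (S_{n+1}(a) S_n(a))²` written in these terms; the parity of `n` enters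
only through the value of `L (S_{n+1} S_n / X)`. -/

section MonicOrthogonal

variable {R : Type*} [CommRing R]

theorem linearMap_C_mul (L : R[X] →ₗ[R] R) (c : R) (p : R[X]) : L (C c * p) = c * L p := by
  rw [← smul_eq_C_mul, map_smul, smul_eq_mul]

theorem coeff_self_of_isMonicOfDegree {p : R[X]} {n : ℕ} (hp : IsMonicOfDegree p n) :
    p.coeff n = 1 := by
  rw [← hp.natDegree_eq, hp.monic.coeff_natDegree]

theorem degree_sub_coeff_mul_lt {p q : R[X]} {n : ℕ} (hp : IsMonicOfDegree p n)
    (hq : q.natDegree ≤ n) : (q - C (q.coeff n) * p).degree < n := by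
  rw [degree_lt_iff_coeff_zero]
  intro k hk
  rw [coeff_sub, coeff_C_mul]
  rcases hk.eq_or_lt with rfl | hk
  · rw [coeff_self_of_isMonicOfDegree hp, mul_one, sub_self]
  · rw [coeff_eq_zero_of_natDegree_lt (hq.trans_lt hk),
      coeff_eq_zero_of_natDegree_lt (hp.natDegree_eq.trans_lt hk), mul_zero, sub_zero]

/-- `P` is the sequence of monic orthogonal polynomials of the functional `L`, with `P n` of
degree `n`. The squared norms `L (P n ^ 2)` are not required to be nonzero. -/
structure IsMonicOrthogonal (L : R[X] →ₗ[R] R) (P : ℕ → R[X]) : Prop where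
  isMonicOfDegree (n : ℕ) : IsMonicOfDegree (P n) n
  map_mul_eq_zero {m n : ℕ} (hmn : m ≠ n) : L (P m * P n) = 0

namespace IsMonicOrthogonal

variable {L : R[X] →ₗ[R] R} {P : ℕ → R[X]} (hP : IsMonicOrthogonal L P)
include hP

theorem coeff_self (n : ℕ) : (P n).coeff n = 1 :=
  coeff_self_of_isMonicOfDegree (hP.isMonicOfDegree n)

theorem natDegree_eq (n : ℕ) : (P n).natDegree = n :=
  (hP.isMonicOfDegree n).natDegree_eq

theorem map_mul_eq_zero_of_degree_lt {n : ℕ} {q : R[X]} (hq : q.degree < n) :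
    L (P n * q) = 0 := by
  suffices h : ∀ m ≤ n, ∀ q : R[X], q.degree < m → L (P n * q) = 0 from h n le_rfl q hq
  intro m
  induction m with
  | zero =>
    intro _ q hq
    rw [degree_lt_iff_coeff_zero] at hq
    rw [show q = 0 from ext fun k => hq k k.zero_le, mul_zero, map_zero]
  | succ m ih =>
    intro hm q hq
    have hq' : q.natDegree ≤ m := natDegree_le_iff_degree_le.2 (Order.le_of_lt_succ hq)
    have hsplit : P n * q = P n * (q - C (q.coeff m) * P m) + C (q.coeff m) * (P n * P m) := by
      ring
    rw [hsplit, map_add, linearMap_C_mul, hP.map_mul_eq_zero (by omega), mul_zero, add_zero]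
    exact ih (by omega) _ (degree_sub_coeff_mul_lt (hP.isMonicOfDegree m) hq')

theorem map_mul_eq_coeff_mul {n : ℕ} {q : R[X]} (hq : q.natDegree ≤ n) :
    L (P n * q) = q.coeff n * L (P n ^ 2) := by
  have hsplit : P n * q = P n * (q - C (q.coeff n) * P n) + C (q.coeff n) * P n ^ 2 := by ring
  rw [hsplit, map_add, linearMap_C_mul, hP.map_mul_eq_zero_of_degree_lt
    (degree_sub_coeff_mul_lt (hP.isMonicOfDegree n) hq), zero_add]

theorem map_succ_mul_X_mul (n : ℕ) : L (P (n + 1) * (X * P n)) = L (P (n + 1) ^ 2) := by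
  have hdeg : (X * P n).natDegree ≤ 1 + n :=
    natDegree_mul_le_of_le natDegree_X_le (hP.natDegree_eq n).le
  rw [add_comm 1 n] at hdeg
  rw [hP.map_mul_eq_coeff_mul hdeg, coeff_X_mul, hP.coeff_self, one_mul]

theorem map_mul_derivative_succ (n : ℕ) :
    L (P n * derivative (P (n + 1))) = (n + 1) * L (P n ^ 2) := by
  have hdeg := natDegree_derivative_le (P (n + 1))
  rw [hP.natDegree_eq, Nat.add_sub_cancel] at hdeg
  rw [hP.map_mul_eq_coeff_mul hdeg, coeff_derivative, hP.coeff_self, one_mul]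

theorem map_succ_mul_derivative (n : ℕ) : L (P (n + 1) * derivative (P n)) = 0 := by
  have hdeg := natDegree_derivative_le (P n)
  rw [hP.natDegree_eq] at hdeg
  rw [hP.map_mul_eq_coeff_mul (by omega), coeff_eq_zero_of_natDegree_lt (by omega), zero_mul]

theorem map_X_mul_derivative_sq (n : ℕ) :
    L (X * derivative (P n ^ 2)) = 2 * n * L (P n ^ 2) := by
  have hdeg : (X * derivative (P n)).natDegree ≤ n := by
    cases n with
    | zero => simp [derivative_of_natDegree_zero (hP.natDegree_eq 0)]
    | succ n =>
      have := natDegree_derivative_le (P (n + 1))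
      rw [hP.natDegree_eq] at this
      exact natDegree_mul_le_of_le natDegree_X_le this |>.trans (by omega)
  have hcoeff : (X * derivative (P n)).coeff n = (n : R) := by
    cases n with
    | zero => simp
    | succ n => rw [coeff_X_mul, coeff_derivative, hP.coeff_self, one_mul, Nat.cast_succ]
  have hsplit : X * derivative (P n ^ 2) = C 2 * (P n * (X * derivative (P n))) := by
    rw [derivative_sq]; ring
  rw [hsplit, linearMap_C_mul, hP.map_mul_eq_coeff_mul hdeg, hcoeff, mul_assoc]

theorem map_X_mul_derivative_of_X_mul_eq {n : ℕ} {q : R[X]} (hq : X * q = P (n + 1) * P n) :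
    L (X * derivative q) = (n + 1) * L (P n ^ 2) - L q := by
  have hsplit : X * derivative q
      = P n * derivative (P (n + 1)) + P (n + 1) * derivative (P n) - q := by
    have h := congrArg derivative hq
    rw [derivative_mul, derivative_mul, derivative_X] at h
    linear_combination h
  rw [hsplit, map_sub, map_add, hP.map_mul_derivative_succ, hP.map_succ_mul_derivative, add_zero]

theorem map_mul_divX_succ (n : ℕ) : L (P n * (P (n + 1)).divX) = L (P n ^ 2) := by
  have hdeg : (P (n + 1)).divX.natDegree ≤ n := by
    rw [natDegree_divX_eq_natDegree_tsub_one, hP.natDegree_eq, Nat.add_sub_cancel]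
  rw [hP.map_mul_eq_coeff_mul hdeg, coeff_divX, hP.coeff_self, one_mul]

theorem map_succ_mul_divX (n : ℕ) : L (P (n + 1) * (P n).divX) = 0 := by
  have hdeg : (P n).divX.natDegree < n + 1 := by
    rw [natDegree_divX_eq_natDegree_tsub_one, hP.natDegree_eq]; omega
  rw [hP.map_mul_eq_coeff_mul hdeg.le, coeff_eq_zero_of_natDegree_lt hdeg, zero_mul]

end IsMonicOrthogonal

/-- The three-term recurrence `X P_n = P_{n+1} + γ_n P_{n-1}` of the monic orthogonal polynomials
of a symmetric functional. At `n = 0` the truncated index `0 - 1 = 0` is harmless as `γ 0 = 0`. -/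
structure IsSymmetricRecurrence (P : ℕ → R[X]) (γ : ℕ → R) : Prop where
  zero : P 0 = 1
  coeff_zero : γ 0 = 0
  X_mul (n : ℕ) : X * P n = P (n + 1) + C (γ n) * P (n - 1)

namespace IsSymmetricRecurrence

variable {L : R[X] →ₗ[R] R} {P : ℕ → R[X]} {γ : ℕ → R} (hγ : IsSymmetricRecurrence P γ)
include hγ

theorem eval_neg (n : ℕ) (x : R) : (P n).eval (-x) = (-1) ^ n * (P n).eval x := by
  induction n using Nat.twoStepInduction with
  | zero => simp [hγ.zero]
  | one =>
    have h : P 1 = X := by simpa [hγ.zero, hγ.coeff_zero] using (hγ.X_mul 0).symm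
    simp [h]
  | more n ih₀ ih₁ =>
    have h : P (n + 2) = X * P (n + 1) - C (γ (n + 1)) * P n :=
      eq_sub_of_add_eq (hγ.X_mul (n + 1)).symm
    simp only [h, eval_sub, eval_mul, eval_X, eval_C, ih₀, ih₁]
    ring

theorem coeff_zero_of_odd (k : ℕ) : (P (2 * k + 1)).coeff 0 = 0 := by
  induction k with
  | zero => simpa [hγ.coeff_zero, eq_comm] using congrArg (coeff · 0) (hγ.X_mul 0)
  | succ k ih => simpa [ih, mul_add, eq_comm] using congrArg (coeff · 0) (hγ.X_mul (2 * k + 2))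

theorem X_mul_divX_of_odd {n : ℕ} (hn : Odd n) : X * (P n).divX = P n := by
  obtain ⟨k, rfl⟩ := hn
  simpa [hγ.coeff_zero_of_odd] using X_mul_divX_add (P (2 * k + 1))

theorem map_sq_succ (hP : IsMonicOrthogonal L P) (n : ℕ) :
    L (P (n + 1) ^ 2) = γ (n + 1) * L (P n ^ 2) := by
  have hsplit : P (n + 1) * (X * P n) = P (n + 2) * P n + C (γ (n + 1)) * P n ^ 2 := by
    have h := hγ.X_mul (n + 1)
    rw [Nat.add_sub_cancel] at h
    linear_combination P n * h
  rw [← hP.map_succ_mul_X_mul, hsplit, map_add, linearMap_C_mul, hP.map_mul_eq_zero (by omega),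
    zero_add]

theorem map_X_sq_mul_sq (hP : IsMonicOrthogonal L P) (n : ℕ) :
    L (X ^ 2 * P n ^ 2) = (γ (n + 1) + γ n) * L (P n ^ 2) := by
  have hsplit : X ^ 2 * P n ^ 2 = P (n + 1) * (X * P n) + C (γ n) * (P (n - 1) * (X * P n)) := by
    linear_combination X * P n * hγ.X_mul n
  rw [hsplit, map_add, linearMap_C_mul, hP.map_succ_mul_X_mul, hγ.map_sq_succ hP]
  cases n with
  | zero => rw [hγ.coeff_zero]; ring
  | succ n =>
    rw [Nat.add_sub_cancel, mul_left_comm (P n), mul_comm (P n), mul_left_comm X,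
      hP.map_succ_mul_X_mul]
    ring

end IsSymmetricRecurrence

end MonicOrthogonal

section LaguerreFreud

variable {K : Type*} [Field K]

/-- The weak form of the Pearson equation `(x w)' = (2α + 2 - 2x²) w` of the generalized Hermite
weight on `[-a, a]`, where `κ` stands for the boundary value `a w(a)`. -/
def SatisfiesPearson (L : K[X] →ₗ[K] K) (α a κ : K) : Prop :=
  ∀ p : K[X], L (X * derivative p) + (2 * α + 2) * L p - 2 * L (X ^ 2 * p)
    = κ * (p.eval a + p.eval (-a))

variable [CharZero K] {L : K[X] →ₗ[K] K} {P : ℕ → K[X]} {γ : ℕ → K} {α a κ : K}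

namespace SatisfiesPearson

variable (hL : SatisfiesPearson L α a κ) (hP : IsMonicOrthogonal L P)
  (hγ : IsSymmetricRecurrence P γ)
include hL hP hγ

theorem mul_map_sq_eq_eval_sq (n : ℕ) :
    ((α + n + 1) - (γ (n + 1) + γ n)) * L (P n ^ 2) = κ * (P n).eval a ^ 2 := by
  have hpearson := hL (P n ^ 2)
  have hsign : ((-1 : K) ^ n) ^ 2 = 1 := by rw [pow_right_comm, neg_one_sq, one_pow]
  rw [hP.map_X_mul_derivative_sq, hγ.map_X_sq_mul_sq hP, eval_pow, eval_pow, hγ.eval_neg, mul_pow,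
    hsign] at hpearson
  linear_combination hpearson / 2

theorem mul_map_sq_eq_eval_mul_eval {n : ℕ} {q : K[X]} {θ : K} (hq : X * q = P (n + 1) * P n)
    (hθ : L q = θ * L (P n ^ 2)) :
    a * ((n + 1 + (2 * α + 1) * θ) / 2 - γ (n + 1)) * L (P n ^ 2)
      = κ * ((P (n + 1)).eval a * (P n).eval a) := by
  have hpearson := hL q
  have hX_sq : X ^ 2 * q = P (n + 1) * (X * P n) := by linear_combination X * hq
  rw [hP.map_X_mul_derivative_of_X_mul_eq hq, hX_sq, hP.map_succ_mul_X_mul, hγ.map_sq_succ hP,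
    hθ] at hpearson
  have heval (x : K) : x * q.eval x = (P (n + 1)).eval x * (P n).eval x := by
    simpa using congrArg (eval x) hq
  have hsign : ((-1 : K) ^ n) ^ 2 = 1 := by rw [pow_right_comm, neg_one_sq, one_pow]
  have hboundary : a * (q.eval a + q.eval (-a)) = 2 * ((P (n + 1)).eval a * (P n).eval a) := by
    have hneg := heval (-a)
    rw [hγ.eval_neg, hγ.eval_neg, pow_succ] at hneg
    linear_combination heval a - hneg + (P (n + 1)).eval a * (P n).eval a * hsign
  linear_combination a / 2 * hpearson + κ / 2 * hboundary

theorem laguerreFreud {n : ℕ} (hn : L (P n ^ 2) ≠ 0) {q : K[X]} {θ : K}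
    (hq : X * q = P (n + 1) * P n) (hθ : L q = θ * L (P n ^ 2)) :
    γ (n + 1) * ((α + n + 2) - (γ (n + 2) + γ (n + 1))) * ((α + n + 1) - (γ (n + 1) + γ n))
      = a ^ 2 * ((n + 1 + (2 * α + 1) * θ) / 2 - γ (n + 1)) ^ 2 := by
  have hsq := hL.mul_map_sq_eq_eval_sq hP hγ n
  have hsq_succ := hL.mul_map_sq_eq_eval_sq hP hγ (n + 1)
  have hcross := hL.mul_map_sq_eq_eval_mul_eval hP hγ hq hθ
  rw [hγ.map_sq_succ hP, Nat.cast_succ] at hsq_succ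
  apply mul_right_cancel₀ (pow_ne_zero 2 hn)
  set h := L (P n ^ 2)
  calc
    _ = ((α + (n + 1) + 1 - (γ (n + 2) + γ (n + 1))) * (γ (n + 1) * h))
        * ((α + n + 1 - (γ (n + 1) + γ n)) * h) := by ring
    _ = (κ * ((P (n + 1)).eval a * (P n).eval a)) ^ 2 := by rw [hsq_succ, hsq]; ring
    _ = _ := by rw [← hcross]; ring

theorem laguerreFreud_of_even {n : ℕ} (hn : L (P n ^ 2) ≠ 0) (heven : Even n) :
    γ (n + 1) * ((α + n + 2) - (γ (n + 2) + γ (n + 1))) * ((α + n + 1) - (γ (n + 1) + γ n))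
      = a ^ 2 * (n / 2 + α + 1 - γ (n + 1)) ^ 2 := by
  have hq : X * (P n * (P (n + 1)).divX) = P (n + 1) * P n := by
    rw [mul_left_comm, hγ.X_mul_divX_of_odd heven.add_one, mul_comm]
  rw [hL.laguerreFreud hP hγ hn hq (θ := 1) (by rw [hP.map_mul_divX_succ, one_mul])]
  ring

theorem laguerreFreud_of_odd {n : ℕ} (hn : L (P n ^ 2) ≠ 0) (hodd : Odd n) :
    γ (n + 1) * ((α + n + 2) - (γ (n + 2) + γ (n + 1))) * ((α + n + 1) - (γ (n + 1) + γ n))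
      = a ^ 2 * ((n + 1) / 2 - γ (n + 1)) ^ 2 := by
  have hq : X * (P (n + 1) * (P n).divX) = P (n + 1) * P n := by
    rw [mul_left_comm, hγ.X_mul_divX_of_odd hodd]
  rw [hL.laguerreFreud hP hγ hn hq (θ := 0) (by rw [hP.map_succ_mul_divX, zero_mul])]
  ring

end SatisfiesPearson

end LaguerreFreud

section WeightedIntegral

variable {w : ℝ → ℝ} {a b : ℝ}

theorem intervalIntegrable_eval_mul (hw : IntervalIntegrable w volume a b) (p : ℝ[X]) :
    IntervalIntegrable (fun x => p.eval x * w x) volume a b :=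
  hw.continuousOn_mul p.continuous.continuousOn

/-- The functional `p ↦ ∫ x in a..b, p x * w x` on polynomials defined by a weight `w`. -/
noncomputable def weightedIntegral (hw : IntervalIntegrable w volume a b) : ℝ[X] →ₗ[ℝ] ℝ where
  toFun p := ∫ x in a..b, p.eval x * w x
  map_add' p q := by
    simp only [eval_add, add_mul]
    exact integral_add (intervalIntegrable_eval_mul hw p) (intervalIntegrable_eval_mul hw q)
  map_smul' c p := by
    simp only [eval_smul, smul_eq_mul, mul_assoc, RingHom.id_apply]
    exact integral_const_mul c _

theorem weightedIntegral_apply (hw : IntervalIntegrable w volume a b) (p : ℝ[X]) :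
    weightedIntegral hw p = ∫ x in a..b, p.eval x * w x :=
  rfl

theorem ae_eval_ne_zero {p : ℝ[X]} (hp : p ≠ 0) : ∀ᵐ x : ℝ, p.eval x ≠ 0 :=
  (finite_setOfPred_isRoot hp).countable.ae_notMem volume

theorem weightedIntegral_sq_pos (hw : IntervalIntegrable w volume a b) (hab : a < b)
    (hpos : ∀ᵐ x ∂volume.restrict (Set.Ioc a b), 0 < w x) {p : ℝ[X]} (hp : p ≠ 0) :
    0 < weightedIntegral hw (p ^ 2) := by
  have hintegrand : ∀ᵐ x ∂volume.restrict (Set.Ioc a b), 0 < (p ^ 2).eval x * w x := by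
    filter_upwards [hpos, ae_restrict_of_ae (ae_eval_ne_zero hp)] with x hwx hpx
    rw [eval_pow]
    positivity
  have hsupport : volume (Function.support (fun x => (p ^ 2).eval x * w x) ∩ Set.Ioc a b)
      = volume (Set.Ioc a b) := by
    rw [← Measure.restrict_apply' measurableSet_Ioc, ← Measure.restrict_apply_univ (Set.Ioc a b)]
    exact measure_congr (Filter.eventuallyEq_univ.2 (hintegrand.mono fun x hx => hx.ne'))
  rw [weightedIntegral_apply, integral_pos_iff_support_of_nonneg_ae'
    (by rw [Set.uIoc_of_le hab.le]; exact hintegrand.mono fun x hx => hx.le)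
    (intervalIntegrable_eval_mul hw _), hsupport, Real.volume_Ioc]
  exact ⟨hab, ENNReal.ofReal_pos.2 (sub_pos.2 hab)⟩

end WeightedIntegral

section AbsRpow

variable {s : ℝ}

theorem intervalIntegrable_abs_rpow (hs : -1 < s) (a b : ℝ) :
    IntervalIntegrable (fun x : ℝ => |x| ^ s) volume a b := by
  have hnonneg {c : ℝ} (hc : 0 ≤ c) : IntervalIntegrable (fun x : ℝ => |x| ^ s) volume 0 c := by
    refine (intervalIntegrable_rpow' hs).congr fun x hx => ?_
    rw [Set.uIoc_of_le hc] at hx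
    simp only [abs_of_pos hx.1]
  have hzero (c : ℝ) : IntervalIntegrable (fun x : ℝ => |x| ^ s) volume 0 c := by
    rcases le_total 0 c with hc | hc
    · exact hnonneg hc
    · simpa using (IntervalIntegrable.iff_comp_neg).1 (hnonneg (neg_nonneg.2 hc))
  exact (hzero a).symm.trans (hzero b)

theorem continuous_mul_abs_rpow (hs : -1 < s) : Continuous fun x : ℝ => x * |x| ^ s := by
  have hs' : s + 1 ≠ 0 := by linarith
  rw [continuous_iff_continuousAt]
  intro x
  rcases eq_or_ne x 0 with rfl | hx
  · have hnorm (x : ℝ) : ‖x * |x| ^ s‖ = |x| ^ (s + 1) := by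
      rw [Real.rpow_add_one' (abs_nonneg x) hs', norm_mul, Real.norm_eq_abs,
        Real.norm_of_nonneg (by positivity), mul_comm]
    have hlim : Continuous fun x : ℝ => |x| ^ (s + 1) :=
      continuous_abs.rpow_const fun _ => Or.inr (by linarith)
    rw [ContinuousAt, zero_mul, tendsto_zero_iff_norm_tendsto_zero]
    simpa only [hnorm, abs_zero, Real.zero_rpow hs'] using hlim.tendsto 0
  · exact continuousAt_id.mul
      (continuous_abs.continuousAt.rpow_const (Or.inl (abs_ne_zero.2 hx)))

theorem hasDerivAt_mul_abs_rpow (s : ℝ) {x : ℝ} (hx : x ≠ 0) :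
    HasDerivAt (fun x : ℝ => x * |x| ^ s) ((s + 1) * |x| ^ s) x := by
  have habs := abs_ne_zero.2 hx
  refine ((hasDerivAt_id x).mul
    ((hasDerivAt_abs hx).rpow_const (p := s) (Or.inl habs))).congr_deriv ?_
  have hpow : |x| * |x| ^ (s - 1) = |x| ^ s := by
    rw [Real.rpow_sub_one habs, mul_div_cancel₀ _ habs]
  simp only [id]
  linear_combination s * hpow + s * |x| ^ (s - 1) * sign_mul_self x

end AbsRpow

section TruncatedHermite

variable {α : ℝ}

/-- The generalized Hermite weight `|x| ^ (2α+1) * exp (-x²)`. -/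
noncomputable def hermiteWeight (α x : ℝ) : ℝ :=
  |x| ^ (2 * α + 1) * Real.exp (-x ^ 2)

theorem hermiteWeight_pos (α : ℝ) {x : ℝ} (hx : x ≠ 0) : 0 < hermiteWeight α x :=
  mul_pos (Real.rpow_pos_of_pos (abs_pos.2 hx) _) (Real.exp_pos _)

theorem hermiteWeight_neg (α x : ℝ) : hermiteWeight α (-x) = hermiteWeight α x := by
  simp only [hermiteWeight, abs_neg, neg_sq]

theorem intervalIntegrable_hermiteWeight (hα : -1 < α) (a b : ℝ) :
    IntervalIntegrable (hermiteWeight α) volume a b :=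
  (intervalIntegrable_abs_rpow (by linarith) a b).mul_continuousOn (by fun_prop)

theorem continuous_mul_hermiteWeight (hα : -1 < α) :
    Continuous fun x => x * hermiteWeight α x := by
  simp only [hermiteWeight, ← mul_assoc]
  exact (continuous_mul_abs_rpow (by linarith)).mul (by fun_prop)

theorem hasDerivAt_mul_hermiteWeight (α : ℝ) {x : ℝ} (hx : x ≠ 0) :
    HasDerivAt (fun x => x * hermiteWeight α x)
      ((2 * α + 2 - 2 * x ^ 2) * hermiteWeight α x) x := by
  have hexp : HasDerivAt (fun x : ℝ => Real.exp (-x ^ 2)) (Real.exp (-x ^ 2) * (-(2 * x))) x := by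
    simpa using ((hasDerivAt_pow 2 x).neg).exp
  simp only [hermiteWeight, ← mul_assoc]
  refine ((hasDerivAt_mul_abs_rpow (2 * α + 1) hx).mul hexp).congr_deriv ?_
  ring

/-- The functional `h` of the truncated generalized Hermite polynomials, on `[-a, a]` with
`a = √z`. -/
noncomputable def truncatedHermite (hα : -1 < α) (a : ℝ) : ℝ[X] →ₗ[ℝ] ℝ :=
  weightedIntegral (intervalIntegrable_hermiteWeight hα (-a) a)

theorem truncatedHermite_apply (hα : -1 < α) (a : ℝ) (p : ℝ[X]) :
    truncatedHermite hα a p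
      = ∫ x in (-a)..a, p.eval x * (|x| ^ (2 * α + 1) * Real.exp (-x ^ 2)) :=
  rfl

theorem truncatedHermite_sq_pos (hα : -1 < α) {a : ℝ} (ha : 0 < a) {p : ℝ[X]} (hp : p ≠ 0) :
    0 < truncatedHermite hα a (p ^ 2) :=
  weightedIntegral_sq_pos _ (neg_lt_self ha)
    (ae_restrict_of_ae ((Measure.ae_ne volume 0).mono fun _ => hermiteWeight_pos α)) hp

theorem satisfiesPearson_truncatedHermite (hα : -1 < α) (a : ℝ) :
    SatisfiesPearson (truncatedHermite hα a) α a (a * hermiteWeight α a) := by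
  intro p
  set r : ℝ[X] := X * derivative p + C (2 * α + 2) * p - C 2 * (X ^ 2 * p) with hr
  have hderiv (x : ℝ) (hx : x ≠ 0) :
      HasDerivAt (fun x => x * hermiteWeight α x * p.eval x) (r.eval x * hermiteWeight α x) x := by
    refine ((hasDerivAt_mul_hermiteWeight α hx).mul (p.hasDerivAt x)).congr_deriv ?_
    simp only [hr, eval_sub, eval_add, eval_mul, eval_pow, eval_X, eval_C]
    ring
  calc
    _ = truncatedHermite hα a r := by
      rw [hr, map_sub, map_add, linearMap_C_mul, linearMap_C_mul]
    _ = a * hermiteWeight α a * p.eval a - -a * hermiteWeight α (-a) * p.eval (-a) :=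
      integral_eq_of_hasDerivAt_off_countable _ _ (Set.countable_singleton 0)
        ((continuous_mul_hermiteWeight hα).mul p.continuous).continuousOn
        (fun x hx => hderiv x hx.2)
        (intervalIntegrable_eval_mul (intervalIntegrable_hermiteWeight hα _ _) r)
    _ = _ := by rw [hermiteWeight_neg]; ring

end TruncatedHermite

/-- Nonlinear relations for the recurrence coefficients of the truncated generalized
Hermite polynomials, at even and odd indices. -/
theorem truncated_hermite_nonlinear (α z : ℝ) (hα : -1 < α) (hz : 0 < z)
    (S : ℕ → Polynomial ℝ)
    (hS_monic : ∀ n, (S n).Monic)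
    (hS_deg : ∀ n, (S n).natDegree = n)
    (hS_orth : ∀ m n, m ≠ n →
      ∫ x in (-(Real.sqrt z))..(Real.sqrt z),
        (S m).eval x * (S n).eval x * |x| ^ (2 * α + 1) * Real.exp (-x ^ 2) = 0)
    (γ : ℕ → ℝ)
    (hγ0 : γ 0 = 0)
    (hrec0 : Polynomial.X * S 0 = S 1)
    (hrec : ∀ n, 1 ≤ n →
      Polynomial.X * S n = S (n + 1) + Polynomial.C (γ n) * S (n - 1)) :
    (∀ k : ℕ, 1 ≤ k →
      γ (2 * k) * ((α + 2 * (k : ℝ) + 1) - (γ (2 * k + 1) + γ (2 * k)))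
          * ((α + 2 * (k : ℝ)) - (γ (2 * k) + γ (2 * k - 1)))
        = z * ((k : ℝ) - γ (2 * k)) ^ 2) ∧
    (∀ k : ℕ,
      γ (2 * k + 1) * ((α + 2 * (k : ℝ) + 2) - (γ (2 * k + 2) + γ (2 * k + 1)))
          * ((α + 2 * (k : ℝ) + 1) - (γ (2 * k + 1) + γ (2 * k)))
        = z * ((k : ℝ) + α + 1 - γ (2 * k + 1)) ^ 2) := by
  set a := Real.sqrt z
  have ha : 0 < a := Real.sqrt_pos.2 hz
  have hP : IsMonicOrthogonal (truncatedHermite hα a) S :=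
    { isMonicOfDegree := fun n => ⟨hS_deg n, hS_monic n⟩
      map_mul_eq_zero := fun {m n} hmn => by
        simpa only [truncatedHermite_apply, eval_mul, mul_assoc] using hS_orth m n hmn }
  have hγ : IsSymmetricRecurrence S γ :=
    { zero := (hS_monic 0).natDegree_eq_zero.1 (hS_deg 0)
      coeff_zero := hγ0
      X_mul := fun n => n.eq_zero_or_pos.elim (fun hn => by simp [hn, hrec0, hγ0]) (hrec n) }
  have hL := satisfiesPearson_truncatedHermite hα a
  have hne (n : ℕ) : truncatedHermite hα a (S n ^ 2) ≠ 0 :=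
    (truncatedHermite_sq_pos hα ha (hS_monic n).ne_zero).ne'
  rw [← Real.sq_sqrt hz.le]
  constructor
  · intro k hk
    obtain ⟨j, rfl⟩ := Nat.exists_eq_add_of_le' hk
    have h := hL.laguerreFreud_of_odd hP hγ (hne (2 * j + 1)) (odd_two_mul_add_one j)
    rw [show 2 * (j + 1) - 1 = 2 * j + 1 by omega, mul_add_one 2 j]
    push_cast at h ⊢
    linear_combination h
  · intro k
    have h := hL.laguerreFreud_of_even hP hγ (hne (2 * k)) (even_two_mul k)
    push_cast at h
    linear_combination h
end
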